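/- Let R be an integral domain and n ≥ 2. Then every invertible matrix in M_n(R) is a sum of three idempotent matrices if and only if R is isomorphic to Z_2 or to Z_3. -/

import Mathlib

/-!
For idempotents `f`, `g`, the elements `c = f + g - 1` and `d = f - g` satisfy `c d = -d c` and
`c² + d² = 1`. Hence the eigenvalues of `f + g` other than `0` and `2` are symmetric under
`μ ↦ 2 - μ`, with multiplicities. If `e + f + g = -1`, then `c = -2 - e` has eigenvalues in
`{-2, -3}`, while any eigenvalue `x` of `c` satisfies `x² = 1` or comes with the eigenvalue `-x`;
this is impossible when `30` is invertible. In characteristic `5`, where `-1 = 3 / 2`, counting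
dimensions excludes `-1` in odd size and a reflection in even size. So `R` has characteristic `2`
or `3`, and since idempotent matrices have natural traces while the traces of invertible matrices
are arbitrary, `R` is a prime field.

Conversely, over such a field a cyclic endomorphism has a basis `b` in which
`T (b j) = d j • b j + b (j + 1)` for all but the last `j`, with diagonal entries `d j` of our
choosing. Up to its last column, `T` is then the sum of an idempotent carrying the columns of even
index and one carrying those of odd index; the diagonal is chosen to give the remaining column
trace one, which makes it idempotent.
-/

open Module (Basis End finrank)
open LinearMap (trace ker range)

/-- `a` is a sum of three idempotents. Only `Mul` and `Add` are assumed, so that the notion applies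
alike to matrices and to endomorphisms. -/
def IsSumThreeIdempotents {A : Type*} [Mul A] [Add A] (a : A) : Prop :=
  ∃ e f g : A, IsIdempotentElem e ∧ IsIdempotentElem f ∧ IsIdempotentElem g ∧ a = e + f + g

theorem IsSumThreeIdempotents.map {A B F : Type*} [Mul A] [Add A] [Mul B] [Add B] [FunLike F A B]
    [MulHomClass F A B] [AddHomClass F A B] {a : A} (ha : IsSumThreeIdempotents a) (φ : F) :
    IsSumThreeIdempotents (φ a) := by
  obtain ⟨e, f, g, he, hf, hg, rfl⟩ := ha
  exact ⟨φ e, φ f, φ g, he.map φ, hf.map φ, hg.map φ, by simp only [map_add]⟩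

section Ring

variable {A : Type*} [Ring A] {e f g : A}

theorem add_sub_one_mul_sub_of_isIdempotentElem (hf : IsIdempotentElem f)
    (hg : IsIdempotentElem g) : (f + g - 1) * (f - g) = -((f - g) * (f + g - 1)) := by
  simp only [sub_mul, mul_sub, add_mul, mul_add, hf.eq, hg.eq, one_mul, mul_one]
  abel

theorem add_sub_one_sq_add_sub_sq_of_isIdempotentElem (hf : IsIdempotentElem f)
    (hg : IsIdempotentElem g) : (f + g - 1) ^ 2 + (f - g) ^ 2 = 1 := by
  simp only [sq, sub_mul, mul_sub, add_mul, mul_add, hf.eq, hg.eq, one_mul, mul_one]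
  abel

theorem two_nsmul_sub_one_mul_self_of_isIdempotentElem (he : IsIdempotentElem e) :
    (2 • e - 1) * (2 • e - 1) = 1 := by
  simp only [mul_sub, sub_mul, mul_smul_comm, smul_mul_assoc, he.eq, mul_one, one_mul]
  abel

theorem not_isSumThreeIdempotents_neg_one [Nontrivial A] (h30 : IsUnit (30 : A)) :
    ¬IsSumThreeIdempotents (-1 : A) := by
  rintro ⟨e, f, g, he, hf, hg, hsum⟩
  have anticomm := add_sub_one_mul_sub_of_isIdempotentElem hf hg
  have sq_add_sq := add_sub_one_sq_add_sub_sq_of_isIdempotentElem hf hg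
  set c := f + g - 1 with hc
  set d := f - g
  have e_eq : e = -2 - c := by
    rw [eq_sub_iff_add_eq, hc, show e + (f + g - 1) = e + f + g - 1 by abel, ← hsum]
    norm_num
  have c_quadratic : c * c + 5 * c + 6 = 0 :=
    calc c * c + 5 * c + 6 = (-2 - c) * (-2 - c) - (-2 - c) := by grind
      _ = 0 := by rw [← e_eq, he.eq, sub_self]
  have ten_mul_c_mul_d : 10 * (c * d) = 0 :=
    calc 10 * (c * d)
        = (c * c + 5 * c + 6) * d - d * (c * c + 5 * c + 6) -
          (c * (c * d + d * c) - (c * d + d * c) * c) + 5 * (c * d + d * c) := by noncomm_ring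
      _ = 0 := by simp [c_quadratic, anticomm]
  have sixty_mul_d : 60 * d = 0 :=
    calc 60 * d = 10 * ((c * c + 5 * c + 6) * d) - (c + 5) * (10 * (c * d)) := by grind
      _ = 0 := by simp [c_quadratic, ten_mul_c_mul_d]
  have d_eq_zero : d = 0 := (h30.pow 2).mul_right_eq_zero.mp <|
    calc 30 ^ 2 * d = 15 * (60 * d) := by grind
      _ = 0 := by rw [sixty_mul_d, mul_zero]
  have c_sq : c * c = 1 := by simpa [d_eq_zero, sq] using sq_add_sq
  have c_linear : 5 * c + 7 = 0 :=
    calc 5 * c + 7 = c * c + 5 * c + 6 - (c * c - 1) := by grind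
      _ = 0 := by rw [c_quadratic, c_sq, sub_self, sub_self]
  have twentyFour_eq_zero : (24 : A) = 0 :=
    calc (24 : A) = 25 * (c * c - 1) - (5 * c + 7) * (5 * c - 7) := by grind
      _ = 0 := by rw [c_sq, c_linear, sub_self, mul_zero, zero_mul, sub_self]
  refine (h30.pow 3).ne_zero ?_
  calc (30 : A) ^ 3 = 1125 * 24 := by norm_num
    _ = 0 := by rw [twentyFour_eq_zero, mul_zero]

end Ring

section Eigenspace

variable {K V : Type*} [Field K] [AddCommGroup V] [Module K V] {F G : End K V} {μ : K}

theorem sub_apply_mem_eigenspace_add (hF : IsIdempotentElem F) (hG : IsIdempotentElem G) {v : V}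
    (hv : v ∈ (F + G).eigenspace μ) : (F - G) v ∈ (F + G).eigenspace (2 - μ) := by
  rw [End.mem_eigenspace_iff] at hv ⊢
  have anticomm := congr($(add_sub_one_mul_sub_of_isIdempotentElem hF hG) v)
  simp only [End.mul_apply, LinearMap.neg_apply, LinearMap.sub_apply (F + G),
    End.one_apply, hv, map_sub (F - G), map_smul] at anticomm
  rw [sub_eq_iff_eq_add.mp anticomm]
  module

theorem sub_apply_sub_apply_of_mem_eigenspace_add (hF : IsIdempotentElem F)
    (hG : IsIdempotentElem G) {v : V} (hv : v ∈ (F + G).eigenspace μ) :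
    (F - G) ((F - G) v) = (μ * (2 - μ)) • v := by
  rw [End.mem_eigenspace_iff] at hv
  have sq_add_sq := congr($(add_sub_one_sq_add_sub_sq_of_isIdempotentElem hF hG) v)
  simp only [sq, LinearMap.add_apply (_ * _), End.mul_apply,
    LinearMap.sub_apply (F + G), End.one_apply, hv, map_sub (F + G), map_smul] at sq_add_sq
  rw [← eq_sub_iff_add_eq'] at sq_add_sq
  rw [sq_add_sq]
  module

variable [FiniteDimensional K V]

theorem finrank_eigenspace_add_le_two_sub (hF : IsIdempotentElem F) (hG : IsIdempotentElem G)
    (h0 : μ ≠ 0) (h2 : μ ≠ 2) :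
    finrank K ((F + G).eigenspace μ) ≤ finrank K ((F + G).eigenspace (2 - μ)) := by
  have maps_to : ∀ v ∈ (F + G).eigenspace μ, (F - G) v ∈ (F + G).eigenspace (2 - μ) :=
    fun v hv => sub_apply_mem_eigenspace_add hF hG hv
  refine LinearMap.finrank_le_finrank_of_injective (f := (F - G).restrict maps_to) ?_
  refine (injective_iff_map_eq_zero _).mpr fun ⟨v, hv⟩ hDv => Subtype.ext ?_
  have hDv : (F - G) v = 0 := congr_arg Subtype.val hDv
  have := sub_apply_sub_apply_of_mem_eigenspace_add hF hG hv
  rw [hDv, map_zero, eq_comm] at this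
  exact (smul_eq_zero_iff_right (mul_ne_zero h0 (sub_ne_zero.mpr h2.symm))).mp this

theorem finrank_eigenspace_add_two_sub (hF : IsIdempotentElem F) (hG : IsIdempotentElem G)
    (h0 : μ ≠ 0) (h2 : μ ≠ 2) :
    finrank K ((F + G).eigenspace (2 - μ)) = finrank K ((F + G).eigenspace μ) := by
  refine le_antisymm ?_ (finrank_eigenspace_add_le_two_sub hF hG h0 h2)
  have reverse := finrank_eigenspace_add_le_two_sub (μ := 2 - μ) hF hG
    (sub_ne_zero.mpr h2.symm) (by simpa using h0)
  rwa [sub_sub_cancel] at reverse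

theorem trace_add_eq_finrank_of_eigenspace_sup_eq_top (hF : IsIdempotentElem F)
    (hG : IsIdempotentElem G) (h0 : μ ≠ 0) (h2 : μ ≠ 2) (hK : (2 : K) ≠ 0)
    (htop : (F + G).eigenspace μ ⊔ (F + G).eigenspace (2 - μ) = ⊤) :
    trace K V (F + G) = finrank K V := by
  set a := μ * (2 - μ) with ha
  have ha0 : a ≠ 0 := mul_ne_zero h0 (sub_ne_zero.mpr h2.symm)
  have sq_eq : (F - G) * (F - G) = a • 1 := by
    refine LinearMap.ext fun v => ?_
    obtain ⟨x, hx, y, hy, rfl⟩ := Submodule.mem_sup.mp (htop ▸ Submodule.mem_top : v ∈ _)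
    have hDx := sub_apply_sub_apply_of_mem_eigenspace_add hF hG hx
    have hDy := sub_apply_sub_apply_of_mem_eigenspace_add hF hG hy
    rw [sub_sub_cancel, mul_comm] at hDy
    simp only [End.mul_apply, map_add, hDx, hDy, LinearMap.smul_apply,
      End.one_apply, ha]
  have trace_eq_neg : a * trace K V (F + G - 1) = -(a * trace K V (F + G - 1)) :=
    calc a * trace K V (F + G - 1)
        = trace K V ((F - G) * ((F - G) * (F + G - 1))) := by
          rw [← mul_assoc, sq_eq, smul_one_mul, map_smul, smul_eq_mul]
      _ = -trace K V ((F - G) * ((F + G - 1) * (F - G))) := by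
          rw [add_sub_one_mul_sub_of_isIdempotentElem hF hG, mul_neg, map_neg, neg_neg]
      _ = -(a * trace K V (F + G - 1)) := by
          rw [LinearMap.trace_mul_comm, mul_assoc, sq_eq, mul_smul_one, map_smul, smul_eq_mul]
  have trace_eq_zero : trace K V (F + G - 1) = 0 := by
    have : 2 * (a * trace K V (F + G - 1)) = 0 := by linear_combination trace_eq_neg
    simpa [hK, ha0] using this
  rwa [map_sub, LinearMap.trace_one, sub_eq_zero] at trace_eq_zero

end Eigenspace

section ThreeHalves

variable {K V : Type*} [Field K] [AddCommGroup V] [Module K V] {E F G S : End K V} {μ δ : K}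

theorem eigenspace_add_inf_ker_le : (E + S).eigenspace μ ⊓ ker E ≤ S.eigenspace μ := by
  rintro v ⟨hv, hEv⟩
  rw [SetLike.mem_coe, End.mem_eigenspace_iff, LinearMap.add_apply, LinearMap.mem_ker.mp hEv,
    zero_add] at hv
  exact End.mem_eigenspace_iff.mpr hv

theorem eigenspace_add_inf_range_le (hE : IsIdempotentElem E) :
    (E + S).eigenspace μ ⊓ range E ≤ S.eigenspace (μ - 1) := by
  rintro v ⟨hv, hEv⟩
  rw [SetLike.mem_coe, End.mem_eigenspace_iff, LinearMap.add_apply,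
    (LinearMap.IsIdempotentElem.mem_range_iff hE).mp hEv, ← eq_sub_iff_add_eq'] at hv
  rw [End.mem_eigenspace_iff, hv, sub_smul, one_smul]

theorem disjoint_eigenspace_sub_one (T : End K V) :
    Disjoint (T.eigenspace μ) (T.eigenspace (μ - 1)) :=
  T.disjoint_genEigenspace (by grind) 1 1

variable [FiniteDimensional K V]

theorem finrank_le_finrank_inf_add {W : Submodule K V} {c : ℕ}
    (hW : finrank K V ≤ finrank K W + c) (U : Submodule K V) :
    finrank K U ≤ finrank K ↥(W ⊓ U) + c := by
  have sup_add_inf := Submodule.finrank_sup_add_finrank_inf_eq W U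
  have sup_le := (W ⊔ U).finrank_le
  omega

theorem finrank_ker_le_finrank_eigenspace_add {c : ℕ}
    (hT : finrank K V ≤ finrank K ((E + S).eigenspace μ) + c) :
    finrank K (ker E) ≤ finrank K (S.eigenspace μ) + c :=
  (finrank_le_finrank_inf_add hT _).trans <|
    Nat.add_le_add_right (Submodule.finrank_mono eigenspace_add_inf_ker_le) c

theorem finrank_range_le_finrank_eigenspace_add (hE : IsIdempotentElem E) {c : ℕ}
    (hT : finrank K V ≤ finrank K ((E + S).eigenspace μ) + c) :
    finrank K (range E) ≤ finrank K (S.eigenspace (μ - 1)) + c :=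
  (finrank_le_finrank_inf_add hT _).trans <|
    Nat.add_le_add_right (Submodule.finrank_mono (eigenspace_add_inf_range_le hE)) c

-- The eigenvalues `μ` and `μ - 1` of `F + G` are exchanged by `x ↦ 2 - x` exactly for `μ = 3 / 2`.
theorem finrank_eigenspace_add_sub_one (hF : IsIdempotentElem F) (hG : IsIdempotentElem G)
    (h3 : (3 : K) ≠ 0) (hμ : 2 * μ = 3) :
    finrank K ((F + G).eigenspace (μ - 1)) = finrank K ((F + G).eigenspace μ) := by
  rw [show μ - 1 = 2 - μ by linear_combination hμ]
  exact finrank_eigenspace_add_two_sub hF hG (by grind) (by grind)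

theorem two_mul_finrank_eigenspace_add_le (hF : IsIdempotentElem F) (hG : IsIdempotentElem G)
    (h3 : (3 : K) ≠ 0) (hμ : 2 * μ = 3) :
    2 * finrank K ((F + G).eigenspace μ) ≤ finrank K V := by
  have := Submodule.finrank_add_finrank_le_of_disjoint
    (disjoint_eigenspace_sub_one (μ := μ) (F + G))
  rw [finrank_eigenspace_add_sub_one hF hG h3 hμ] at this
  omega

theorem not_isSumThreeIdempotents_algebraMap_of_odd_finrank (h3 : (3 : K) ≠ 0) (hμ : 2 * μ = 3)
    (hodd : Odd (finrank K V)) : ¬IsSumThreeIdempotents (algebraMap K (End K V) μ) := by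
  rintro ⟨E, F, G, hE, hF, hG, hsum⟩
  have eigenspace_eq_top : (E + (F + G)).eigenspace μ = ⊤ := by
    refine eq_top_iff.mpr fun v _ => End.mem_eigenspace_iff.mpr ?_
    rw [← add_assoc, ← hsum, Module.algebraMap_end_apply]
  have hT : finrank K V ≤ finrank K ((E + (F + G)).eigenspace μ) + 0 := by
    rw [eigenspace_eq_top, finrank_top, add_zero]
  have ker_le := finrank_ker_le_finrank_eigenspace_add hT
  have range_le := finrank_range_le_finrank_eigenspace_add hE hT
  rw [finrank_eigenspace_add_sub_one hF hG h3 hμ] at range_le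
  have rank_nullity := LinearMap.finrank_range_add_finrank_ker E
  have two_mul_le := two_mul_finrank_eigenspace_add_le hF hG h3 hμ
  grind

theorem finrank_range_eq_of_finrank_le_eigenspace_add_one {T : End K V} (hE : IsIdempotentElem E)
    (hF : IsIdempotentElem F) (hG : IsIdempotentElem G) (hsum : T = E + F + G) (h3 : (3 : K) ≠ 0)
    (hμ : 2 * μ = 3) {m : ℕ} (hm : finrank K V = 2 * m)
    (hT : finrank K V ≤ finrank K (T.eigenspace μ) + 1)
    (htrace : trace K V T = finrank K V * μ + δ) (h1 : δ ≠ 1) (hneg : δ ≠ -1) :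
    finrank K (range E) = m := by
  rw [add_assoc] at hsum
  subst hsum
  have ker_le := finrank_ker_le_finrank_eigenspace_add hT
  have range_le := finrank_range_le_finrank_eigenspace_add hE hT
  rw [finrank_eigenspace_add_sub_one hF hG h3 hμ] at range_le
  have rank_nullity := LinearMap.finrank_range_add_finrank_ker E
  have two_mul_le := two_mul_finrank_eigenspace_add_le hF hG h3 hμ
  rcases ne_or_eq (finrank K ((F + G).eigenspace μ)) m with hk | hk
  · omega
  have sup_eq_top : (F + G).eigenspace μ ⊔ (F + G).eigenspace (2 - μ) = ⊤ := by
    rw [show 2 - μ = μ - 1 by linear_combination -hμ]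
    refine Submodule.eq_top_of_disjoint _ _ ?_ (disjoint_eigenspace_sub_one _)
    rw [finrank_eigenspace_add_sub_one hF hG h3 hμ]
    omega
  have finrank_range_eq : (finrank K (range E) : K) = m + δ := by
    have trace_add := trace_add_eq_finrank_of_eigenspace_sup_eq_top hF hG (by grind) (by grind)
      (by grind) sup_eq_top
    rw [map_add, trace_add, (LinearMap.IsIdempotentElem.isProj_range E hE).trace, hm] at htrace
    push_cast at htrace
    linear_combination htrace + m * hμ
  have cases_rank : finrank K (range E) + 1 = m ∨ finrank K (range E) = m ∨
      finrank K (range E) = m + 1 := by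
    omega
  rcases cases_rank with h | h | h
  · rw [← h, Nat.cast_add, Nat.cast_one] at finrank_range_eq
    exact absurd (by linear_combination -finrank_range_eq) hneg
  · exact h
  · rw [h, Nat.cast_add, Nat.cast_one] at finrank_range_eq
    exact absurd (by linear_combination -finrank_range_eq) h1

theorem not_isSumThreeIdempotents_of_even_finrank {T : End K V} (h3 : (3 : K) ≠ 0)
    (hμ : 2 * μ = 3) (heven : Even (finrank K V))
    (hT : finrank K V ≤ finrank K (T.eigenspace μ) + 1)
    (htrace : trace K V T = finrank K V * μ + δ) (h0 : δ ≠ 0) (h1 : δ ≠ 1) (hneg : δ ≠ -1) :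
    ¬IsSumThreeIdempotents T := by
  rintro ⟨E, F, G, hE, hF, hG, hsum⟩
  obtain ⟨m, hm⟩ := even_iff_exists_two_mul.mp heven
  have range_E : finrank K (range E) = m :=
    finrank_range_eq_of_finrank_le_eigenspace_add_one hE hF hG hsum h3 hμ hm hT htrace h1 hneg
  have range_F : finrank K (range F) = m :=
    finrank_range_eq_of_finrank_le_eigenspace_add_one hF hE hG (by rw [hsum, add_comm E])
      h3 hμ hm hT htrace h1 hneg
  have range_G : finrank K (range G) = m :=
    finrank_range_eq_of_finrank_le_eigenspace_add_one hG hE hF (by rw [hsum, add_comm, add_assoc])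
      h3 hμ hm hT htrace h1 hneg
  rw [hsum, map_add, map_add, (LinearMap.IsIdempotentElem.isProj_range E hE).trace,
    (LinearMap.IsIdempotentElem.isProj_range F hF).trace,
    (LinearMap.IsIdempotentElem.isProj_range G hG).trace, range_E, range_F, range_G, hm] at htrace
  push_cast at htrace
  exact h0 (by linear_combination -htrace - m * hμ)

end ThreeHalves

section InvertibleMatrix

variable {m : Type*} [Fintype m]

theorem exists_natCast_eq_trace_of_isIdempotentElem {R : Type*} [CommRing R] [IsDomain R]
    {E : Matrix m m R} (hE : IsIdempotentElem E) : ∃ k : ℕ, E.trace = k := by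
  classical
  let K := FractionRing R
  let T : End K (m → K) := Matrix.toLinAlgEquiv' ((algebraMap R K).mapMatrix E)
  have hT : IsIdempotentElem T := (hE.map (algebraMap R K).mapMatrix).map _
  refine ⟨finrank K (range T), IsFractionRing.injective R K ?_⟩
  calc algebraMap R K E.trace = ((algebraMap R K).mapMatrix E).trace :=
        AddMonoidHom.map_trace (algebraMap R K) E
    _ = trace K (m → K) T := (Matrix.trace_toLin'_eq _).symm
    _ = finrank K (range T) := (LinearMap.IsIdempotentElem.isProj_range T hT).trace
    _ = algebraMap R K (finrank K (range T)) := (map_natCast _ _).symm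

variable [DecidableEq m]

theorem not_isSumThreeIdempotents_neg_one_of_odd_card {K : Type*} [Field K] (h3 : (3 : K) ≠ 0)
    (h5 : (5 : K) = 0) (hodd : Odd (Fintype.card m)) :
    ¬IsSumThreeIdempotents (-1 : Matrix m m K) := by
  intro h
  refine not_isSumThreeIdempotents_algebraMap_of_odd_finrank (V := m → K) h3
    (μ := -1) (by linear_combination -h5) (by rwa [Module.finrank_fintype_fun_eq_card]) ?_
  simpa only [map_neg, map_one] using h.map Matrix.toLinAlgEquiv'

theorem not_isSumThreeIdempotents_reflection_of_even_card {K : Type*} [Field K] (h3 : (3 : K) ≠ 0)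
    (h5 : (5 : K) = 0) (heven : Even (Fintype.card m)) (i : m) :
    ¬IsSumThreeIdempotents (2 • Matrix.single i i 1 - 1 : Matrix m m K) := by
  set A : Matrix m m K := 2 • Matrix.single i i 1 - 1 with hA
  have ker_le :
      ker (LinearMap.proj i : (m → K) →ₗ[K] K) ≤ End.eigenspace (Matrix.toLin' A) (-1) := by
    intro v hv
    rw [LinearMap.mem_ker, LinearMap.proj_apply] at hv
    rw [End.mem_eigenspace_iff, Matrix.toLin'_apply, hA, Matrix.sub_mulVec, Matrix.smul_mulVec,
      Matrix.single_mulVec, hv]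
    simp
  have finrank_le : finrank K (m → K) ≤ finrank K (End.eigenspace (Matrix.toLin' A) (-1)) + 1 := by
    rw [← LinearMap.finrank_range_add_finrank_ker (LinearMap.proj i : (m → K) →ₗ[K] K), add_comm]
    exact add_le_add (Submodule.finrank_mono ker_le)
      ((Submodule.finrank_le _).trans_eq (Module.finrank_self K))
  have trace_eq : trace K (m → K) (Matrix.toLin' A) = finrank K (m → K) * -1 + 2 := by
    rw [Matrix.trace_toLin'_eq, hA, Matrix.trace_sub, Matrix.trace_smul,
      Matrix.trace_single_eq_same, Matrix.trace_one, Module.finrank_fintype_fun_eq_card, two_nsmul]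
    ring
  intro h
  refine not_isSumThreeIdempotents_of_even_finrank h3 (by linear_combination -h5)
    (by rwa [Module.finrank_fintype_fun_eq_card]) finrank_le trace_eq
    (by grind) (by grind) (by grind) (h.map Matrix.toLinAlgEquiv')

variable {R : Type*} [CommRing R]

theorem exists_isUnit_trace_eq [Nontrivial m] (a : R) :
    ∃ A : Matrix m m R, IsUnit A ∧ A.trace = a := by
  obtain ⟨i, j, hij⟩ := exists_pair_ne m
  refine ⟨Matrix.transvection i j (a - Fintype.card m) * Matrix.transvection j i 1, ?_, ?_⟩
  · rw [Matrix.isUnit_iff_isUnit_det, Matrix.det_mul, Matrix.det_transvection_of_ne i j hij,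
      Matrix.det_transvection_of_ne j i hij.symm, one_mul]
    exact isUnit_one
  · simp [Matrix.transvection, add_mul, mul_add, hij, hij.symm]

theorem nonempty_ringEquiv_zmod_of_surjective_natCast
    (hR : Function.Surjective ((↑) : ℕ → R)) (p : ℕ) [CharP R p] : Nonempty (R ≃+* ZMod p) := by
  refine ⟨(RingEquiv.ofBijective (ZMod.castHom (dvd_refl p) R)
    ⟨ZMod.castHom_injective R, fun a => ?_⟩).symm⟩
  obtain ⟨k, rfl⟩ := hR a
  exact ⟨k, map_natCast _ k⟩

variable [IsDomain R]

theorem exists_isUnit_not_isSumThreeIdempotents [Nonempty m] (h2 : (2 : R) ≠ 0)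
    (h3 : (3 : R) ≠ 0) : ∃ A : Matrix m m R, IsUnit A ∧ ¬IsSumThreeIdempotents A := by
  let K := FractionRing R
  let φ : Matrix m m R →+* Matrix m m K := (algebraMap R K).mapMatrix
  have algebraMap_ne_zero {a : R} (ha : a ≠ 0) : algebraMap R K a ≠ 0 :=
    (map_ne_zero_iff _ (IsFractionRing.injective R K)).mpr ha
  rcases eq_or_ne (5 : R) 0 with h5 | h5
  · have h5 : (5 : K) = 0 := by rw [← map_ofNat (algebraMap R K) 5, h5, map_zero]
    have h3 : (3 : K) ≠ 0 := map_ofNat (algebraMap R K) 3 ▸ algebraMap_ne_zero h3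
    rcases Nat.even_or_odd (Fintype.card m) with heven | hodd
    · obtain ⟨i⟩ := ‹Nonempty m›
      have single_idem : IsIdempotentElem (Matrix.single i i 1 : Matrix m m R) := by
        simp [IsIdempotentElem]
      have φ_single : φ (Matrix.single i i 1) = Matrix.single i i 1 := by simp [φ]
      refine ⟨2 • Matrix.single i i 1 - 1,
        .of_mul_eq_one _ (two_nsmul_sub_one_mul_self_of_isIdempotentElem single_idem), fun h =>
        not_isSumThreeIdempotents_reflection_of_even_card h3 h5 heven i ?_⟩
      simpa only [map_sub, map_nsmul, map_one, φ_single] using h.map φ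
    · refine ⟨-1, isUnit_one.neg, fun h =>
        not_isSumThreeIdempotents_neg_one_of_odd_card (m := m) h3 h5 hodd ?_⟩
      simpa only [map_neg, map_one] using h.map φ
  · refine ⟨-1, isUnit_one.neg, fun h =>
      not_isSumThreeIdempotents_neg_one (A := Matrix m m K) ?_ ?_⟩
    · have h30 : (30 : R) ≠ 0 := by
        rw [show (30 : R) = 2 * 3 * 5 by norm_num]
        exact mul_ne_zero (mul_ne_zero h2 h3) h5
      simpa only [map_ofNat] using
        (algebraMap_ne_zero h30).isUnit.map (algebraMap K (Matrix m m K))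
    · simpa only [map_neg, map_one] using h.map φ

theorem surjective_natCast_of_forall_isUnit [Nontrivial m]
    (h : ∀ A : Matrix m m R, IsUnit A → IsSumThreeIdempotents A) :
    Function.Surjective ((↑) : ℕ → R) := by
  intro a
  obtain ⟨A, hA, rfl⟩ := exists_isUnit_trace_eq (m := m) a
  obtain ⟨E, F, G, hE, hF, hG, rfl⟩ := h A hA
  obtain ⟨k, hk⟩ := exists_natCast_eq_trace_of_isIdempotentElem hE
  obtain ⟨l, hl⟩ := exists_natCast_eq_trace_of_isIdempotentElem hF
  obtain ⟨n, hn⟩ := exists_natCast_eq_trace_of_isIdempotentElem hG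
  exact ⟨k + l + n, by rw [Matrix.trace_add, Matrix.trace_add, hk, hl, hn]; push_cast; rfl⟩

theorem nonempty_ringEquiv_zmod_of_forall_isUnit [Nontrivial m]
    (h : ∀ A : Matrix m m R, IsUnit A → IsSumThreeIdempotents A) :
    Nonempty (R ≃+* ZMod 2) ∨ Nonempty (R ≃+* ZMod 3) := by
  have natCast_surjective := surjective_natCast_of_forall_isUnit h
  have two_or_three : (2 : R) = 0 ∨ (3 : R) = 0 := by
    by_contra! hne
    obtain ⟨A, hA, hnot⟩ := exists_isUnit_not_isSumThreeIdempotents (m := m) hne.1 hne.2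
    exact hnot (h A hA)
  refine two_or_three.imp (fun h2 => ?_) fun h3 => ?_
  · have : CharP R 2 := (CharP.charP_iff_prime_eq_zero Nat.prime_two).mpr h2
    exact nonempty_ringEquiv_zmod_of_surjective_natCast natCast_surjective 2
  · have : CharP R 3 := (CharP.charP_iff_prime_eq_zero Nat.prime_three).mpr h3
    exact nonempty_ringEquiv_zmod_of_surjective_natCast natCast_surjective 3

end InvertibleMatrix

section Basis

variable {R M ι : Type*} [CommRing R] [AddCommGroup M] [Module R M] (b : Basis ι R M)

theorem isIdempotentElem_constr_indicator {s : Set ι} {t : ι → M}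
    (ht : ∀ i ∈ s, t i ∈ Submodule.span R (b '' sᶜ)) :
    IsIdempotentElem (b.constr R (s.indicator fun i => b i + t i) : End R M) := by
  set p : End R M := b.constr R (s.indicator fun i => b i + t i) with hp
  have span_le_ker : Submodule.span R (b '' sᶜ) ≤ ker p := by
    refine Submodule.span_le.mpr ?_
    rintro _ ⟨i, hi, rfl⟩
    rw [SetLike.mem_coe, LinearMap.mem_ker, hp, Basis.constr_basis, Set.indicator_of_notMem hi]
  refine b.ext fun i => ?_
  rw [End.mul_apply]
  by_cases hi : i ∈ s
  · have p_basis : p (b i) = b i + t i := by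
      rw [hp, Basis.constr_basis, Set.indicator_of_mem hi]
    rw [p_basis, map_add, LinearMap.mem_ker.mp (span_le_ker (ht i hi)), add_zero, p_basis]
  · have p_basis : p (b i) = 0 := by
      rw [hp, Basis.constr_basis, Set.indicator_of_notMem hi]
    rw [p_basis, map_zero]

theorem trace_constr_indicator [Fintype ι] {s : Set ι} {t : ι → M}
    (ht : ∀ i ∈ s, t i ∈ Submodule.span R (b '' sᶜ)) :
    trace R M (b.constr R (s.indicator fun i => b i + t i)) = ∑ i, s.indicator 1 i := by
  classical
  rw [LinearMap.trace_eq_matrix_trace R b]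
  refine Finset.sum_congr rfl fun i _ => ?_
  rw [Matrix.diag_apply, LinearMap.toMatrix_apply, Basis.constr_basis]
  by_cases hi : i ∈ s
  · have repr_eq_zero : b.repr (t i) i = 0 := Finsupp.notMem_support_iff.mp fun h =>
      b.repr_support_subset_of_mem_span _ (ht i hi) h hi
    simp [hi, repr_eq_zero]
  · simp [hi]

theorem isIdempotentElem_of_apply_basis_eq_zero [Finite ι] {f : End R M} {k : ι}
    (hf : ∀ i ≠ k, f (b i) = 0) (htrace : trace R M f = 1) : IsIdempotentElem f := by
  have f_eq : f = (b.coord k).smulRight (f (b k)) := by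
    classical
    refine b.ext fun i => ?_
    rcases eq_or_ne i k with rfl | hi
    · simp
    · simp [hf i hi, Finsupp.single_eq_of_ne' hi]
  have := Module.Finite.of_basis b
  have := Module.Free.of_basis b
  have coord_eq_one : b.coord k (f (b k)) = 1 := by
    rw [← htrace, f_eq, LinearMap.trace_smulRight, ← f_eq]
  rw [f_eq]
  ext x
  simp [-Basis.coord_apply, coord_eq_one]

theorem isSumThreeIdempotents_of_apply_basis [Fintype ι] {T : End R M} {k : ι} {s₁ s₂ : Set ι}
    {t₁ t₂ : ι → M}
    (h₁ : ∀ i ∈ s₁, t₁ i ∈ Submodule.span R (b '' s₁ᶜ))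
    (h₂ : ∀ i ∈ s₂, t₂ i ∈ Submodule.span R (b '' s₂ᶜ))
    (hT : ∀ i ≠ k, T (b i) =
      s₁.indicator (fun i => b i + t₁ i) i + s₂.indicator (fun i => b i + t₂ i) i)
    (htrace : trace R M T = ∑ i, (s₁.indicator 1 i + s₂.indicator 1 i) + 1) :
    IsSumThreeIdempotents T := by
  refine ⟨_, _, T - (_ + _), isIdempotentElem_constr_indicator b h₁,
    isIdempotentElem_constr_indicator b h₂, ?_, (add_sub_cancel _ T).symm⟩
  refine isIdempotentElem_of_apply_basis_eq_zero b (k := k) (fun i hi => ?_) ?_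
  · simp only [LinearMap.sub_apply, LinearMap.add_apply, Basis.constr_basis, hT i hi, sub_self]
  · rw [map_sub, map_add, trace_constr_indicator b h₁, trace_constr_indicator b h₂, htrace,
      Finset.sum_add_distrib, add_sub_cancel_left]

end Basis

section Bidiagonal

variable {R M : Type*} [CommRing R] [AddCommGroup M] [Module R M]

theorem snoc_succ_mem_span_image_compl {m : ℕ} (b : Basis (Fin (m + 1)) R M)
    {s : Set (Fin (m + 1))} {i : Fin (m + 1)} (hi : ∀ j : Fin m, i = j.castSucc → j.succ ∉ s) :
    (Fin.snoc (fun j => b j.succ) 0 : Fin (m + 1) → M) i ∈ Submodule.span R (b '' sᶜ) := by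
  cases i using Fin.lastCases with
  | last => simp
  | cast j => exact Submodule.subset_span ⟨j.succ, hi j rfl, by simp⟩

theorem isSumThreeIdempotents_of_apply_castSucc_eq {T : End R M} {m s : ℕ}
    (b : Basis (Fin (m + 1)) R M)
    (hT : ∀ j : Fin m, T (b j.castSucc) =
      (if (j : ℕ) = 0 ∧ s = 2 then 2 else 1 : R) • b j.castSucc + b j.succ)
    (hs : s ≤ 2) (htrace : trace R M T = (m + 1 : ℕ) + s) : IsSumThreeIdempotents T := by
  -- Splitting by parity gives `m + 1` indices; correcting at one end turns this into `m + s`.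
  let s₁ : Set (Fin (m + 1)) := {i | Even (i : ℕ) ∧ ¬(i = Fin.last m ∧ s = 0)}
  let s₂ : Set (Fin (m + 1)) := {i | Odd (i : ℕ) ∧ ¬(i = Fin.last m ∧ s = 0) ∨ i = 0 ∧ s = 2}
  let t : Fin (m + 1) → M := Fin.snoc (fun j => b j.succ) 0
  have indicator_add (i : Fin (m + 1)) : s₁.indicator (1 : Fin (m + 1) → R) i + s₂.indicator 1 i =
      1 - (if i = Fin.last m ∧ s = 0 then 1 else 0) + if i = 0 ∧ s = 2 then 1 else 0 := by
    simp only [Set.indicator_apply, Pi.one_apply]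
    grind
  refine isSumThreeIdempotents_of_apply_basis b (k := Fin.last m) (s₁ := s₁) (s₂ := s₂)
    (t₁ := t) (t₂ := Function.update t 0 0) (fun i hi => ?_) (fun i hi => ?_) (fun i hi => ?_) ?_
  · exact snoc_succ_mem_span_image_compl b fun j hj => by grind
  · rcases eq_or_ne i 0 with rfl | hi0
    · simp
    · rw [Function.update_of_ne hi0]
      exact snoc_succ_mem_span_image_compl b fun j hj => by grind
  · obtain ⟨j, rfl⟩ := Fin.exists_castSucc_eq.mpr hi
    have castSucc_eq_zero : j.castSucc = 0 ↔ (j : ℕ) = 0 := by grind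
    rw [hT]
    rcases Nat.even_or_odd (j : ℕ) with hj | hj
    · by_cases h : (j : ℕ) = 0 ∧ s = 2
      · simp [s₁, s₂, t, Function.update_apply, castSucc_eq_zero, h, two_smul, add_right_comm]
      · simp [s₁, s₂, t, castSucc_eq_zero, hj, h, hi]
    · have : (j : ℕ) ≠ 0 := by grind
      simp [s₁, s₂, t, castSucc_eq_zero, hj, hi, this]
  · simp_rw [indicator_add]
    interval_cases s <;> simp [htrace, Finset.sum_add_distrib, ← one_add_one_eq_two, add_assoc]

end Bidiagonal

section Cyclic

variable {K V : Type*} [Field K] [AddCommGroup V] [Module K V] {T : End K V} {w : V}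

theorem exists_basis_apply_castSucc_eq {m : ℕ} (b : Basis (Fin (m + 1)) K V)
    (hb : ∀ i, b i = (T ^ (i : ℕ)) w) (d : ℕ → K) :
    ∃ b' : Basis (Fin (m + 1)) K V,
      ∀ j : Fin m, T (b' j.castSucc) = d j • b' j.castSucc + b' j.succ := by
  let v (i : ℕ) : V := Nat.rec w (fun j x => T x - d j • x) i
  have T_v (i : ℕ) : T (v i) = d i • v i + v (i + 1) := (add_sub_cancel _ _).symm
  have pow_mem_span (i : ℕ) : (T ^ i) w ∈ Submodule.span K (v '' Set.Iic i) := by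
    induction i with
    | zero => exact Submodule.subset_span ⟨0, Set.mem_Iic.mpr le_rfl, rfl⟩
    | succ i ih =>
      have span_le : Submodule.span K (v '' Set.Iic i) ≤
          (Submodule.span K (v '' Set.Iic (i + 1))).comap T := by
        refine Submodule.span_le.mpr ?_
        rintro _ ⟨j, hj, rfl⟩
        have hj : j ≤ i := hj
        rw [SetLike.mem_coe, Submodule.mem_comap, T_v]
        exact add_mem (Submodule.smul_mem _ _ (Submodule.subset_span ⟨j, hj.trans i.le_succ, rfl⟩))
          (Submodule.subset_span ⟨j + 1, Nat.succ_le_succ hj, rfl⟩)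
      rw [pow_succ', End.mul_apply]
      exact span_le ih
  have top_le_span : ⊤ ≤ Submodule.span K (Set.range fun i : Fin (m + 1) => v i) := by
    rw [← b.span_eq, Submodule.span_le]
    rintro _ ⟨i, rfl⟩
    rw [hb]
    refine Submodule.span_mono ?_ (pow_mem_span i)
    rintro _ ⟨j, hj, rfl⟩
    exact ⟨⟨j, hj.trans_lt i.is_lt⟩, rfl⟩
  refine ⟨basisOfTopLeSpanOfCardEqFinrank _ top_le_span (Module.finrank_eq_card_basis b).symm,
    fun j => ?_⟩
  simp [T_v]

theorem isSumThreeIdempotents_of_basis_pow {n : ℕ} (b : Basis (Fin n) K V)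
    (hb : ∀ i, b i = (T ^ (i : ℕ)) w) {s : ℕ} (hs : s ≤ 2) (htrace : trace K V T = n + s) :
    IsSumThreeIdempotents T := by
  rcases n with _ | m
  · have : Subsingleton V := b.repr.toEquiv.subsingleton
    exact ⟨0, 0, 0, .zero, .zero, .zero, Subsingleton.elim _ _⟩
  · obtain ⟨b', hb'⟩ := exists_basis_apply_castSucc_eq b hb fun j => if j = 0 ∧ s = 2 then 2 else 1
    exact isSumThreeIdempotents_of_apply_castSucc_eq b' hb' hs htrace

end Cyclic

section FiniteDimensional

open Polynomial

universe u

variable {K : Type u} {V : Type*} [Field K] [AddCommGroup V] [Module K V] [FiniteDimensional K V]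

theorem exists_linearEquiv_pi_adjoinRoot (T : End K V) :
    ∃ (ι : Type u) (f : ι → K[X]) (_ : ∀ i, f i ≠ 0)
      (e : V ≃ₗ[K] ∀ i, AdjoinRoot (f i)),
      ∀ x i, e (T x) i = AdjoinRoot.root (f i) * e x i := by
  classical
  obtain ⟨ι, _, p, hp, k, ⟨φ⟩⟩ := Module.equiv_directSum_of_isTorsion
    (Module.AEval.isTorsion_of_finiteDimensional K V T)
  let f (i : ι) : K[X] := p i ^ k i
  let e : V ≃ₗ[K] ∀ i, AdjoinRoot (f i) :=
    Module.AEval'.of T ≪≫ₗ φ.restrictScalars K ≪≫ₗ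
      DirectSum.linearEquivFunOnFintype K ι fun i => AdjoinRoot (f i)
  refine ⟨ι, f, fun i => pow_ne_zero _ (hp i).ne_zero, e, fun x i => ?_⟩
  obtain ⟨q, hq⟩ := Ideal.Quotient.mk_surjective (φ (Module.AEval'.of T x) i)
  have φ_apply : φ (Module.AEval'.of T (T x)) i = Ideal.Quotient.mk _ (X * q) := by
    rw [← Module.AEval'.X_smul_of, map_smul, DirectSum.smul_apply, ← hq]
    rfl
  calc e (T x) i
    _ = AdjoinRoot.mk (f i) (X * q) := φ_apply
    _ = AdjoinRoot.root (f i) * AdjoinRoot.mk (f i) q := map_mul (AdjoinRoot.mk (f i)) X q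
    _ = AdjoinRoot.root (f i) * e x i := congrArg (AdjoinRoot.root (f i) * ·) hq

theorem isSumThreeIdempotents_mulLeft_root (hK : ∀ a : K, ∃ s : ℕ, s ≤ 2 ∧ a = s) {f : K[X]}
    (hf : f ≠ 0) : IsSumThreeIdempotents (LinearMap.mulLeft K (AdjoinRoot.root f)) := by
  let pb := AdjoinRoot.powerBasis hf
  obtain ⟨s, hs, hs_eq⟩ := hK (trace K _ (LinearMap.mulLeft K (AdjoinRoot.root f)) - pb.dim)
  refine isSumThreeIdempotents_of_basis_pow (w := 1) pb.basis (fun i => ?_) hs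
    (sub_eq_iff_eq_add'.mp hs_eq)
  rw [pb.basis_eq_pow, AdjoinRoot.powerBasis_gen, LinearMap.pow_mulLeft,
    LinearMap.mulLeft_apply, mul_one]

theorem isSumThreeIdempotents_piMap {R ι : Type*} [Semiring R] {M : ι → Type*}
    [∀ i, AddCommMonoid (M i)] [∀ i, Module R (M i)]
    {T : ∀ i, End R (M i)} (hT : ∀ i, IsSumThreeIdempotents (T i)) :
    IsSumThreeIdempotents (LinearMap.piMap T : End R (∀ i, M i)) := by
  choose E F G hE hF hG hsum using hT
  have piMap_idem {P : ∀ i, End R (M i)} (hP : ∀ i, IsIdempotentElem (P i)) :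
      IsIdempotentElem (LinearMap.piMap P : End R (∀ i, M i)) :=
    LinearMap.ext fun x => funext fun i => congr($(hP i) (x i))
  exact ⟨LinearMap.piMap E, LinearMap.piMap F, LinearMap.piMap G, piMap_idem hE, piMap_idem hF,
    piMap_idem hG, LinearMap.ext fun x => funext fun i => congr($(hsum i) (x i))⟩

theorem isSumThreeIdempotents_end (hK : ∀ a : K, ∃ s : ℕ, s ≤ 2 ∧ a = s) (T : End K V) :
    IsSumThreeIdempotents T := by
  obtain ⟨ι, f, hf, e, he⟩ := exists_linearEquiv_pi_adjoinRoot T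
  have T_eq : T = e.symm.conjRingEquiv
      (LinearMap.piMap fun i => LinearMap.mulLeft K (AdjoinRoot.root (f i))) := by
    ext x
    apply e.injective
    ext i
    simp [he]
  rw [T_eq]
  exact (isSumThreeIdempotents_piMap fun i => isSumThreeIdempotents_mulLeft_root hK (hf i)).map _

end FiniteDimensional

section ZMod

variable {m : Type*} [Fintype m]

theorem isSumThreeIdempotents_matrix {K : Type*} [Field K] (hK : ∀ a : K, ∃ s : ℕ, s ≤ 2 ∧ a = s)
    (A : Matrix m m K) : IsSumThreeIdempotents A := by
  classical
  simpa only [AlgEquiv.symm_apply_apply] using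
    (isSumThreeIdempotents_end hK (Matrix.toLinAlgEquiv' A)).map Matrix.toLinAlgEquiv'.symm

theorem isSumThreeIdempotents_of_ringEquiv_zmod {R : Type*} [CommRing R] {p : ℕ} [Fact p.Prime]
    (hp : p ≤ 3) (φ : R ≃+* ZMod p) (A : Matrix m m R) : IsSumThreeIdempotents A := by
  classical
  have natCast_val (a : ZMod p) : ∃ s : ℕ, s ≤ 2 ∧ a = s :=
    ⟨a.val, Nat.lt_succ_iff.mp (a.val_lt.trans_le hp), (ZMod.natCast_zmod_val a).symm⟩
  simpa only [RingEquiv.symm_apply_apply] using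
    (isSumThreeIdempotents_matrix natCast_val (φ.mapMatrix A)).map φ.mapMatrix.symm

end ZMod

theorem invertible_matrix_sum_three_idempotents_domain_iff_general (R m : Type*) [CommRing R]
    [IsDomain R] [Fintype m] [DecidableEq m] [Nontrivial m] :
    List.TFAE [∀ A : Matrix m m R, IsSumThreeIdempotents A,
      ∀ A : Matrix m m R, IsUnit A → IsSumThreeIdempotents A,
      Nonempty (R ≃+* ZMod 2) ∨ Nonempty (R ≃+* ZMod 3)] := by
  tfae_have 1 → 2 := fun h A _ => h A
  tfae_have 2 → 3 := nonempty_ringEquiv_zmod_of_forall_isUnit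
  tfae_have 3 → 1 := by
    rintro (⟨⟨φ⟩⟩ | ⟨⟨φ⟩⟩) A
    · exact isSumThreeIdempotents_of_ringEquiv_zmod (by norm_num) φ A
    · exact isSumThreeIdempotents_of_ringEquiv_zmod le_rfl φ A
  tfae_finish

/-- For an integral domain `R` and `n ≥ 2`, every invertible matrix in `M_n(R)` is a sum
of three idempotent matrices if and only if `R ≅ ℤ/2` or `R ≅ ℤ/3`. -/
theorem invertible_matrix_sum_three_idempotents_domain_iff (R : Type*) [CommRing R]
    [IsDomain R] (n : ℕ) (hn : 2 ≤ n) :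
    (∀ A : Matrix (Fin n) (Fin n) R, IsUnit A →
      ∃ E₁ E₂ E₃ : Matrix (Fin n) (Fin n) R,
        E₁ * E₁ = E₁ ∧ E₂ * E₂ = E₂ ∧ E₃ * E₃ = E₃ ∧ A = E₁ + E₂ + E₃) ↔
    (Nonempty (R ≃+* ZMod 2) ∨ Nonempty (R ≃+* ZMod 3)) := by
  have : Nontrivial (Fin n) := Fin.nontrivial_iff_two_le.mpr hn
  exact (invertible_matrix_sum_three_idempotents_domain_iff_general R (Fin n)).out 1 2
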